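/- Let V be a finite-dimensional real inner product space with dim V = n+1 ≥ 2, B a topological space and k ≥ 1. Suppose there exist open sets V_1, …, V_k covering B × S(V) and continuous maps ψ_i : [−1,1] × V_i → S(V) such that ψ_i(1,(b,u)) = u and ψ_i(−1,(b,u)) = −u for all (b,u) ∈ V_i. Then there exist open sets U_0, U_1, …, U_k covering B × S(V) × S(V) and continuous maps φ_i : [−1,1] × U_i → S(V) such that φ_i(1,(b,u,v)) = u and φ_i(−1,(b,u,v)) = v for all (b,u,v) ∈ U_i, and φ_i(t,(b,u,u)) = u for all t ∈ [−1,1] whenever (b,u,u) ∈ U_i. -/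

import Mathlib

open scoped RealInnerProductSpace

open scoped Classical in
/-- Normalized segment from `v` (at `s = 0`) to `u` (at `s = 1`). -/
noncomputable def segS {V : Type*} [NormedAddCommGroup V] [InnerProductSpace ℝ V]
    (q : ℝ × Metric.sphere (0 : V) 1 × Metric.sphere (0 : V) 1) : Metric.sphere (0 : V) 1 :=
  if h : q.1 • (q.2.1 : V) + (1 - q.1) • (q.2.2 : V) ≠ 0 then
    ⟨‖q.1 • (q.2.1 : V) + (1 - q.1) • (q.2.2 : V)‖⁻¹ •
      (q.1 • (q.2.1 : V) + (1 - q.1) • (q.2.2 : V)), by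
      rw [mem_sphere_zero_iff_norm, norm_smul, norm_inv, norm_norm,
        inv_mul_cancel₀ (norm_ne_zero_iff.2 h)]⟩
  else q.2.1

section
variable {V : Type*} [NormedAddCommGroup V] [InnerProductSpace ℝ V]

lemma segS_coe (q : ℝ × Metric.sphere (0 : V) 1 × Metric.sphere (0 : V) 1)
    (h : q.1 • (q.2.1 : V) + (1 - q.1) • (q.2.2 : V) ≠ 0) :
    (segS q : V) = ‖q.1 • (q.2.1 : V) + (1 - q.1) • (q.2.2 : V)‖⁻¹ •
      (q.1 • (q.2.1 : V) + (1 - q.1) • (q.2.2 : V)) := by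
  rw [segS, dif_pos h]

lemma segS_cont : ContinuousOn (segS (V := V))
    {q | q.1 • (q.2.1 : V) + (1 - q.1) • (q.2.2 : V) ≠ 0} := by
  rw [Topology.IsInducing.subtypeVal.continuousOn_iff]
  have hc : Continuous fun q : ℝ × Metric.sphere (0 : V) 1 × Metric.sphere (0 : V) 1 =>
      q.1 • (q.2.1 : V) + (1 - q.1) • (q.2.2 : V) := by fun_prop
  refine ContinuousOn.congr (ContinuousOn.smul (hc.norm.continuousOn.inv₀ ?_) hc.continuousOn)
    (fun q hq => segS_coe q hq)
  intro q hq
  exact norm_ne_zero_iff.2 hq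

lemma segS_one (u v : Metric.sphere (0 : V) 1) : segS (1, u, v) = u := by
  have hu : ‖(u : V)‖ = 1 := norm_eq_of_mem_sphere u
  have h0 : (u : V) ≠ 0 := by rw [← norm_ne_zero_iff, hu]; exact one_ne_zero
  apply Subtype.ext
  rw [segS_coe _ (by simpa using h0)]
  simp [hu]

lemma segS_zero (u v : Metric.sphere (0 : V) 1) : segS (0, u, v) = v := by
  have hu : ‖(v : V)‖ = 1 := norm_eq_of_mem_sphere v
  have h0 : (v : V) ≠ 0 := by rw [← norm_ne_zero_iff, hu]; exact one_ne_zero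
  apply Subtype.ext
  rw [segS_coe _ (by simpa using h0)]
  simp [hu]

lemma segS_diag (s : ℝ) (u : Metric.sphere (0 : V) 1) : segS (s, u, u) = u := by
  have hu : ‖(u : V)‖ = 1 := norm_eq_of_mem_sphere u
  have h0 : (u : V) ≠ 0 := by rw [← norm_ne_zero_iff, hu]; exact one_ne_zero
  have e : s • (u : V) + (1 - s) • (u : V) = u := by rw [← add_smul]; simp
  apply Subtype.ext
  rw [segS_coe _ (by simpa only [e] using h0)]
  simp only [e]
  simp [hu]

lemma seg_ne {s : ℝ} (h0 : 0 ≤ s) (h1 : s ≤ 1) {u v : Metric.sphere (0 : V) 1} (h : u ≠ -v) :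
    s • (u : V) + (1 - s) • (v : V) ≠ 0 := by
  intro e
  have hu : ‖(u : V)‖ = 1 := norm_eq_of_mem_sphere u
  have hv : ‖(v : V)‖ = 1 := norm_eq_of_mem_sphere v
  have e1 := eq_neg_of_add_eq_zero_left e
  have e2 := congrArg norm e1
  rw [norm_neg, norm_smul, norm_smul, hu, hv, Real.norm_of_nonneg h0,
    Real.norm_of_nonneg (by linarith)] at e2
  have hs : s ≠ 0 := by intro h; rw [h] at e2; norm_num at e2
  have e3 : 1 - s = s := by linarith
  rw [e3, ← smul_neg] at e1
  exact h (Subtype.ext (by simpa using smul_right_injective V hs e1))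

end

/-- Theorem 2.2, implication (2) ⟹ (3), for a trivialized bundle: from fibrewise
motion planning rules reversing the antipodal map one constructs fibrewise motion
planners fixing the diagonal. -/
theorem stmt3 {V : Type*} [NormedAddCommGroup V] [InnerProductSpace ℝ V]
    [FiniteDimensional ℝ V] {n : ℕ} (hn : 1 ≤ n) (hdim : Module.finrank ℝ V = n + 1)
    {B : Type*} [TopologicalSpace B] {k : ℕ} (hk : 1 ≤ k)
    (W : Fin k → Set (B × Metric.sphere (0 : V) 1))
    (ψ : Fin k → ℝ × (B × Metric.sphere (0 : V) 1) → Metric.sphere (0 : V) 1)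
    (hWopen : ∀ i, IsOpen (W i))
    (hWcover : (⋃ i, W i) = Set.univ)
    (hψcont : ∀ i, ContinuousOn (ψ i) (Set.Icc (-1 : ℝ) 1 ×ˢ W i))
    (hψ1 : ∀ i, ∀ p ∈ W i, ψ i (1, p) = p.2)
    (hψ2 : ∀ i, ∀ p ∈ W i, ψ i (-1, p) = -p.2) :
    ∃ (U : Fin (k + 1) → Set (B × Metric.sphere (0 : V) 1 × Metric.sphere (0 : V) 1))
      (φ : Fin (k + 1) → ℝ × (B × Metric.sphere (0 : V) 1 × Metric.sphere (0 : V) 1) →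
        Metric.sphere (0 : V) 1),
      (∀ i, IsOpen (U i)) ∧
      (⋃ i, U i) = Set.univ ∧
      (∀ i, ContinuousOn (φ i) (Set.Icc (-1 : ℝ) 1 ×ˢ U i)) ∧
      (∀ i, ∀ p ∈ U i, φ i (1, p) = p.2.1) ∧
      (∀ i, ∀ p ∈ U i, φ i (-1, p) = p.2.2) ∧
      (∀ i, ∀ p ∈ U i, p.2.1 = p.2.2 → ∀ t ∈ Set.Icc (-1 : ℝ) 1, φ i (t, p) = p.2.1) := by
  have hneg : ∀ u : Metric.sphere (0 : V) 1, u ≠ -u := by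
    intro u h
    have hu : ‖(u : V)‖ = 1 := norm_eq_of_mem_sphere u
    have h2 : (u : V) = -u := congrArg Subtype.val h
    replace h2 : (u : V) = 0 := by
      have h3 : (2 : ℝ) • (u : V) = 0 := by
        rw [two_smul]
        exact add_eq_zero_iff_eq_neg.2 h2
      exact (smul_eq_zero.1 h3).resolve_left two_ne_zero
    rw [h2] at hu
    simp at hu
  refine ⟨Fin.cons {p | p.2.1 ≠ -p.2.2} (fun i => {p | (p.1, p.2.1) ∈ W i ∧ p.2.1 ≠ p.2.2}),
    Fin.cons (fun x => segS ((1 + x.1) / 2, x.2.2.1, x.2.2.2))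
      (fun i x => segS (min 1 (1 + x.1), ψ i (max (2 * x.1 - 1) (-1), (x.2.1, x.2.2.1)),
        x.2.2.2)), ?_, ?_, ?_, ?_, ?_, ?_⟩
  · intro i
    refine Fin.cases ?_ (fun i => ?_) i
    · simp only [Fin.cons_zero]
      exact isOpen_ne_fun (by fun_prop) (by fun_prop)
    · simp only [Fin.cons_succ]
      exact ((hWopen i).preimage (by fun_prop)).inter (isOpen_ne_fun (by fun_prop) (by fun_prop))
  · refine Set.eq_univ_of_forall fun p => Set.mem_iUnion.2 ?_
    by_cases h : p.2.1 = -p.2.2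
    · have : (p.1, p.2.1) ∈ ⋃ i, W i := by rw [hWcover]; trivial
      obtain ⟨i, hi⟩ := Set.mem_iUnion.1 this
      refine ⟨i.succ, ?_⟩
      simp only [Fin.cons_succ]
      refine ⟨hi, fun h' => hneg p.2.2 ?_⟩
      rw [← h, h']
    · exact ⟨0, by simp only [Fin.cons_zero]; exact h⟩
  · intro i
    refine Fin.cases ?_ (fun i => ?_) i
    · simp only [Fin.cons_zero]
      refine segS_cont.comp (Continuous.continuousOn (by fun_prop)) ?_
      rintro ⟨t, p⟩ ⟨ht, hp⟩
      exact seg_ne (by linarith [ht.1]) (by linarith [ht.2]) hp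
    · simp only [Fin.cons_succ]
      refine segS_cont.comp ?_ ?_
      · refine ContinuousOn.prodMk (Continuous.continuousOn (by fun_prop))
          (ContinuousOn.prodMk ?_ (Continuous.continuousOn (by fun_prop)))
        refine (hψcont i).comp (Continuous.continuousOn (by fun_prop)) ?_
        rintro ⟨t, p⟩ ⟨ht, hp⟩
        exact ⟨⟨le_max_right _ _, max_le (by linarith [ht.2]) (by norm_num)⟩, hp.1⟩
      · rintro ⟨t, p⟩ ⟨ht, hp⟩
        rcases le_total 0 t with h | h
        · have e : min 1 (1 + t) = 1 := min_eq_left (by linarith)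
          simp only [Set.mem_ofPred_eq, e, sub_self, one_smul, zero_smul, add_zero]
          rw [← norm_ne_zero_iff, norm_eq_of_mem_sphere]
          exact one_ne_zero
        · have e : max (2 * t - 1) (-1) = -1 := max_eq_right (by linarith)
          refine seg_ne (le_min zero_le_one (by linarith [ht.1])) (min_le_left _ _) ?_
          simp only [e]
          rw [hψ2 i _ hp.1]
          exact fun h => hp.2 (neg_injective h)
  · intro i
    refine Fin.cases ?_ (fun i => ?_) i
    · intro p _
      simp only [Fin.cons_zero]
      norm_num
      exact segS_one _ _
    · intro p hp
      simp only [Fin.cons_succ] at hp ⊢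
      norm_num [segS_one]
      exact hψ1 i _ hp.1
  · intro i
    refine Fin.cases ?_ (fun i => ?_) i
    · intro p _
      simp only [Fin.cons_zero]
      norm_num
      exact segS_zero _ _
    · intro p hp
      simp only [Fin.cons_succ]
      norm_num [segS_zero]
  · intro i
    refine Fin.cases ?_ (fun i => ?_) i
    · intro p _ h t _
      simp only [Fin.cons_zero]
      rw [← h, segS_diag]
    · intro p hp h
      simp only [Fin.cons_succ] at hp
      exact absurd h hp.2
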